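/- arXiv:1403.6252 — 2 statements merged into one kernel-verified Lean document; each statement's English description precedes it below -/
import Mathlib

section
/- For every (R,θ) ∈ [R₀,∞) × ℝ one has ∂_R η(R,θ) − ∂_R U(R,θ) + 1/(4R) ≥ 0 and |∂_θ η(R,θ) − ∂_θ U(R,θ)| ≤ ∂_R η(R,θ) − ∂_R U(R,θ) + 1/(4R). -/
open Real MeasureTheory Set

/-- Partial derivative with respect to the first (time) variable `R`. -/
noncomputable def pdR (f : ℝ → ℝ → ℝ) (R θ : ℝ) : ℝ := deriv (fun r => f r θ) R

/-- Partial derivative with respect to the second (space) variable `θ`. -/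
noncomputable def pdT (f : ℝ → ℝ → ℝ) (R θ : ℝ) : ℝ := deriv (fun t => f R t) θ

/-!
In the null directions `∂_R ± ∂_θ` the constraint equations become sums of squares,
`(∂_R ± ∂_θ) η = R [((∂_R ± ∂_θ) U)² + (e^{4U} / (4R²)) ((∂_R ± ∂_θ) A)²]`.
The `U`-square absorbs `(∂_R ± ∂_θ) U` at the cost of `1 / (4R)`, since
`R x² - x + 1 / (4R) = R (x - 1 / (2R))²`. The bounds in the two null directions are together
the bound on the absolute value.
-/

/-- The energy density of the pair `(U, A)`: the constraint for `∂_R η` says that `∂_R η` is `R`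
times this quantity. -/
noncomputable def energyDensity (U A : ℝ → ℝ → ℝ) (R θ : ℝ) : ℝ :=
  (pdR U R θ) ^ 2 + (pdT U R θ) ^ 2
    + exp (4 * U R θ) / (4 * R ^ 2) * ((pdR A R θ) ^ 2 + (pdT A R θ) ^ 2)

/-- The momentum density of the pair `(U, A)`: the constraint for `∂_θ η` says that `∂_θ η` is `R`
times this quantity. -/
noncomputable def momentumDensity (U A : ℝ → ℝ → ℝ) (R θ : ℝ) : ℝ :=
  2 * pdR U R θ * pdT U R θ + exp (4 * U R θ) / (2 * R ^ 2) * (pdR A R θ * pdT A R θ)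

theorem le_mul_sq_add_one_div_four_mul {K : Type*} [Field K] [LinearOrder K]
    [IsStrictOrderedRing K] {r : K} (hr : 0 < r) (x : K) : x ≤ r * x ^ 2 + 1 / (4 * r) := by
  have complete_square : r * x ^ 2 + 1 / (4 * r) - x = r * (x - 1 / (2 * r)) ^ 2 := by
    field_simp
    ring
  have square_nonneg : 0 ≤ r * (x - 1 / (2 * r)) ^ 2 := by positivity
  exact sub_nonneg.mp (complete_square ▸ square_nonneg)

section NullDirections

variable (U A : ℝ → ℝ → ℝ) (R θ : ℝ)

theorem energyDensity_add_momentumDensity :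
    energyDensity U A R θ + momentumDensity U A R θ =
      (pdR U R θ + pdT U R θ) ^ 2
        + exp (4 * U R θ) / (4 * R ^ 2) * (pdR A R θ + pdT A R θ) ^ 2 := by
  unfold energyDensity momentumDensity
  ring

theorem energyDensity_sub_momentumDensity :
    energyDensity U A R θ - momentumDensity U A R θ =
      (pdR U R θ - pdT U R θ) ^ 2
        + exp (4 * U R θ) / (4 * R ^ 2) * (pdR A R θ - pdT A R θ) ^ 2 := by
  unfold energyDensity momentumDensity
  ring

theorem sq_pdR_add_pdT_le_energyDensity_add_momentumDensity :
    (pdR U R θ + pdT U R θ) ^ 2 ≤ energyDensity U A R θ + momentumDensity U A R θ := by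
  rw [energyDensity_add_momentumDensity]
  exact le_add_of_nonneg_right (by positivity)

theorem sq_pdR_sub_pdT_le_energyDensity_sub_momentumDensity :
    (pdR U R θ - pdT U R θ) ^ 2 ≤ energyDensity U A R θ - momentumDensity U A R θ := by
  rw [energyDensity_sub_momentumDensity]
  exact le_add_of_nonneg_right (by positivity)

variable {R}

theorem pdR_add_pdT_le (hR : 0 < R) :
    pdR U R θ + pdT U R θ ≤
      R * (energyDensity U A R θ + momentumDensity U A R θ) + 1 / (4 * R) :=
  calc pdR U R θ + pdT U R θ
    _ ≤ R * (pdR U R θ + pdT U R θ) ^ 2 + 1 / (4 * R) := le_mul_sq_add_one_div_four_mul hR _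
    _ ≤ R * (energyDensity U A R θ + momentumDensity U A R θ) + 1 / (4 * R) := by
      gcongr
      exact sq_pdR_add_pdT_le_energyDensity_add_momentumDensity U A R θ

theorem pdR_sub_pdT_le (hR : 0 < R) :
    pdR U R θ - pdT U R θ ≤
      R * (energyDensity U A R θ - momentumDensity U A R θ) + 1 / (4 * R) :=
  calc pdR U R θ - pdT U R θ
    _ ≤ R * (pdR U R θ - pdT U R θ) ^ 2 + 1 / (4 * R) := le_mul_sq_add_one_div_four_mul hR _
    _ ≤ R * (energyDensity U A R θ - momentumDensity U A R θ) + 1 / (4 * R) := by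
      gcongr
      exact sq_pdR_sub_pdT_le_energyDensity_sub_momentumDensity U A R θ

end NullDirections

theorem stmt11_general {U A η : ℝ → ℝ → ℝ} {R θ : ℝ} (hR : 0 < R)
    (conηR : pdR η R θ = R * energyDensity U A R θ)
    (conηT : pdT η R θ = R * momentumDensity U A R θ) :
    0 ≤ pdR η R θ - pdR U R θ + 1 / (4 * R)
      ∧ |pdT η R θ - pdT U R θ| ≤ pdR η R θ - pdR U R θ + 1 / (4 * R) := by
  have bound_add : pdR U R θ + pdT U R θ ≤ pdR η R θ + pdT η R θ + 1 / (4 * R) := by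
    simpa only [conηR, conηT, mul_add] using pdR_add_pdT_le U A θ hR
  have bound_sub : pdR U R θ - pdT U R θ ≤ pdR η R θ - pdT η R θ + 1 / (4 * R) := by
    simpa only [conηR, conηT, mul_sub] using pdR_sub_pdT_le U A θ hR
  have abs_bound : |pdT η R θ - pdT U R θ| ≤ pdR η R θ - pdR U R θ + 1 / (4 * R) :=
    abs_le.mpr ⟨by linarith, by linarith⟩
  exact ⟨(abs_nonneg _).trans abs_bound, abs_bound⟩

theorem stmt11
    (R₀ : ℝ) (hR₀ : 0 < R₀)
    (U A : ℝ → ℝ → ℝ)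
    (hU : ContDiff ℝ (⊤ : ℕ∞) (Function.uncurry U))
    (hA : ContDiff ℝ (⊤ : ℕ∞) (Function.uncurry A))
    (hUper : ∀ R θ, U R (θ + 2 * π) = U R θ)
    (hAper : ∀ R θ, A R (θ + 2 * π) = A R θ)
    (η : ℝ → ℝ → ℝ)
    (hη : ContDiff ℝ (⊤ : ℕ∞) (Function.uncurry η))
    (hηper : ∀ R θ, η R (θ + 2 * π) = η R θ)
    (conηR : ∀ R, R₀ ≤ R → ∀ θ : ℝ,
      pdR η R θ = R * ((pdR U R θ) ^ 2 + (pdT U R θ) ^ 2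
        + exp (4 * U R θ) / (4 * R ^ 2) * ((pdR A R θ) ^ 2 + (pdT A R θ) ^ 2)))
    (conηT : ∀ R, R₀ ≤ R → ∀ θ : ℝ,
      pdT η R θ = R * (2 * pdR U R θ * pdT U R θ
        + exp (4 * U R θ) / (2 * R ^ 2) * (pdR A R θ * pdT A R θ)))
 :
    ∀ R, R₀ ≤ R → ∀ θ : ℝ,
      0 ≤ pdR η R θ - pdR U R θ + 1 / (4 * R)
      ∧ |pdT η R θ - pdT U R θ| ≤ pdR η R θ - pdR U R θ + 1 / (4 * R) := by
  intro R hR θ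
  exact stmt11_general (hR₀.trans_le hR) (conηR R hR θ) (conηT R hR θ)
end

section
/- There exists a constant C > 0, depending only on the solution, such that |U(R,θ)| ≤ C R^{1/2} for all R ≥ R₀ and all θ ∈ ℝ. -/
open Real MeasureTheory Set

/-! In the logarithmic time `t = log R`, the pair `P = 2 U - t`, `Q = A` solves a damped wave map
equation into the hyperbolic plane, whose energy over one period is nonincreasing but is damped
only through its kinetic part. Pairing the momenta of `P` and `Q` with the deviations of `P` and
`Q` from their means trades potential for kinetic energy, at the cost of error terms governed by
the spatial oscillation of `P`. That oscillation is bounded by the square root of the energy, so a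
first choice of multipliers yields some exponential decay of the energy; the oscillation then
decays too, the errors become integrable, and equal multipliers give the sharp rate
`O(exp (-t))`. Hence the spatial mean of `∂ₜ P` is `O(exp (t / 2))`, while `P` stays within bounded
distance of its mean, so `P = O(exp (t / 2)) = O(√R)`.
-/

open Function Filter Asymptotics

section IntervalInequalities

variable {a b : ℝ}

lemma integral_eq_mul_intervalAverage (hab : a < b) (f : ℝ → ℝ) :
    ∫ x in a..b, f x = (b - a) * ⨍ x in a..b, f x := by
  rw [interval_average_eq_div, mul_div_cancel₀ _ (sub_pos.2 hab).ne']

lemma sq_intervalAverage_le {f : ℝ → ℝ} (hab : a < b) (hf : Continuous f) :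
    (⨍ x in a..b, f x) ^ 2 ≤ ⨍ x in a..b, f x ^ 2 :=
  (even_two.convexOn_pow).map_set_average_le (by fun_prop) isClosed_univ
    (by simp [uIoc_of_le hab.le, hab]) (by simp [uIoc_of_le hab.le]) (by simp)
    (hf.intervalIntegrable a b).def' ((hf.pow 2).intervalIntegrable a b).def'

lemma sq_integral_le {f : ℝ → ℝ} (hab : a < b) (hf : Continuous f) :
    (∫ x in a..b, f x) ^ 2 ≤ (b - a) * ∫ x in a..b, f x ^ 2 := by
  simp only [integral_eq_mul_intervalAverage hab]
  calc ((b - a) * ⨍ x in a..b, f x) ^ 2 = (b - a) ^ 2 * (⨍ x in a..b, f x) ^ 2 := mul_pow ..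
    _ ≤ (b - a) ^ 2 * ⨍ x in a..b, f x ^ 2 := by gcongr; exact sq_intervalAverage_le hab hf
    _ = (b - a) * ((b - a) * ⨍ x in a..b, f x ^ 2) := by ring

lemma abs_sub_le_integral_abs_deriv {f f' : ℝ → ℝ} (hf : ∀ x, HasDerivAt f (f' x) x)
    (hf' : Continuous f') {x y : ℝ} (hx : x ∈ Icc a b) (hy : y ∈ Icc a b) :
    |f x - f y| ≤ ∫ z in a..b, |f' z| := by
  wlog hyx : y ≤ x generalizing x y
  · rw [abs_sub_comm]
    exact this hy hx (le_of_not_ge hyx)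
  calc |f x - f y| = |∫ z in y..x, f' z| := by
        rw [intervalIntegral.integral_eq_sub_of_hasDerivAt (fun z _ => hf z)
          (hf'.intervalIntegrable y x)]
    _ ≤ ∫ z in y..x, |f' z| := intervalIntegral.abs_integral_le_integral_abs hyx
    _ ≤ ∫ z in a..b, |f' z| :=
        intervalIntegral.integral_mono_interval hy.1 hyx hx.2
          (Eventually.of_forall fun _ => abs_nonneg _) (hf'.abs.intervalIntegrable a b)

lemma integral_sub_intervalAverage (hab : a < b) {f : ℝ → ℝ} (hf : Continuous f) (c : ℝ) :
    ∫ x in a..b, (c - f x) = (b - a) * (c - ⨍ x in a..b, f x) := by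
  rw [intervalIntegral.integral_sub intervalIntegrable_const (hf.intervalIntegrable a b),
    integral_eq_mul_intervalAverage hab f, intervalIntegral.integral_const, smul_eq_mul]
  ring

lemma abs_sub_intervalAverage_le (hab : a < b) {f : ℝ → ℝ} (hf : Continuous f) {c D : ℝ}
    (h : ∀ x ∈ Icc a b, |c - f x| ≤ D) : |c - ⨍ x in a..b, f x| ≤ D := by
  have hab' : 0 < b - a := sub_pos.2 hab
  refine le_of_mul_le_mul_left ?_ hab'
  calc (b - a) * |c - ⨍ x in a..b, f x| = |∫ x in a..b, (c - f x)| := by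
        rw [integral_sub_intervalAverage hab hf, abs_mul, abs_of_pos hab']
    _ ≤ ∫ x in a..b, |c - f x| := intervalIntegral.abs_integral_le_integral_abs hab.le
    _ ≤ ∫ _ in a..b, D := intervalIntegral.integral_mono_on hab.le
        (Continuous.intervalIntegrable (by fun_prop) a b) intervalIntegrable_const h
    _ = (b - a) * D := by simp

lemma exp_two_mul_eq_sq (x : ℝ) : exp (2 * x) = exp x ^ 2 := by
  rw [← exp_nat_mul, Nat.cast_ofNat]

-- The completed square behind this bound is `(exp c * m + exp p * sinh (p - c) * q) ^ 2`.
lemma neg_sub_sinh_sq_mul_le_exp_mul_mul {p c δ : ℝ} (h : |p - c| ≤ δ) (q m : ℝ) :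
    -(exp (2 * c) * m) * (m - q) - sinh δ ^ 2 * (exp (2 * p) * q ^ 2) ≤ exp (2 * p) * q * m := by
  have hcross : 2 * exp p * exp c * sinh (p - c) = exp p ^ 2 - exp c ^ 2 := by
    rw [sinh_eq, neg_sub, exp_sub, exp_sub]
    field_simp
  have hsinh : sinh (p - c) ^ 2 ≤ sinh δ ^ 2 := by
    rw [← sq_abs, abs_sinh]
    gcongr
    exact sinh_le_sinh.2 h
  have hsinh_mul := mul_le_mul_of_nonneg_right hsinh (by positivity : 0 ≤ exp p ^ 2 * q ^ 2)
  rw [exp_two_mul_eq_sq, exp_two_mul_eq_sq]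
  linear_combination sq_nonneg (exp c * m + exp p * sinh (p - c) * q) + hsinh_mul + m * q * hcross

lemma neg_sinh_sq_mul_integral_le {p q : ℝ → ℝ} (hab : a < b) (hp : Continuous p)
    (hq : Continuous q) {c δ : ℝ} (hδ : ∀ x ∈ Icc a b, |p x - c| ≤ δ) :
    -(sinh δ ^ 2 * ∫ x in a..b, exp (2 * p x) * q x ^ 2)
      ≤ ∫ x in a..b, exp (2 * p x) * q x * ⨍ y in a..b, q y := by
  set m := ⨍ y in a..b, q y with hm
  calc -(sinh δ ^ 2 * ∫ x in a..b, exp (2 * p x) * q x ^ 2)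
      = ∫ x in a..b, (-(exp (2 * c) * m) * (m - q x)
          - sinh δ ^ 2 * (exp (2 * p x) * q x ^ 2)) := by
        rw [intervalIntegral.integral_sub (Continuous.intervalIntegrable (by fun_prop) a b)
          (Continuous.intervalIntegrable (by fun_prop) a b), intervalIntegral.integral_const_mul,
          intervalIntegral.integral_const_mul, integral_sub_intervalAverage hab hq, ← hm]
        ring
    _ ≤ ∫ x in a..b, exp (2 * p x) * q x * m :=
        intervalIntegral.integral_mono_on hab.le (Continuous.intervalIntegrable (by fun_prop) a b)
          (Continuous.intervalIntegrable (by fun_prop) a b)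
          fun x hx => neg_sub_sinh_sq_mul_le_exp_mul_mul (hδ x hx) (q x) m

lemma exp_mul_abs_sub_intervalAverage_le {p f f' : ℝ → ℝ} (hab : a < b) (hp : Continuous p)
    (hf : ∀ x, HasDerivAt f (f' x) x) (hf' : Continuous f') {δ : ℝ}
    (hδ : ∀ x ∈ Icc a b, ∀ y ∈ Icc a b, |p x - p y| ≤ δ) {x : ℝ} (hx : x ∈ Icc a b) :
    exp (p x) * |f x - ⨍ y in a..b, f y| ≤ exp δ * ∫ y in a..b, exp (p y) * |f' y| := by
  have hfc : Continuous f := continuous_iff_continuousAt.2 fun x => (hf x).continuousAt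
  calc exp (p x) * |f x - ⨍ y in a..b, f y| ≤ exp (p x) * ∫ y in a..b, |f' y| := by
        gcongr
        exact abs_sub_intervalAverage_le hab hfc fun y hy =>
          abs_sub_le_integral_abs_deriv hf hf' hx hy
    _ = ∫ y in a..b, exp (p x) * |f' y| := (intervalIntegral.integral_const_mul ..).symm
    _ ≤ ∫ y in a..b, exp δ * (exp (p y) * |f' y|) := by
        refine intervalIntegral.integral_mono_on hab.le
          (Continuous.intervalIntegrable (by fun_prop) a b)
          (Continuous.intervalIntegrable (by fun_prop) a b) fun y hy => ?_
        rw [← mul_assoc, ← exp_add]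
        gcongr
        linarith [le_of_abs_le (hδ x hx y hy)]
    _ = exp δ * ∫ y in a..b, exp (p y) * |f' y| := intervalIntegral.integral_const_mul ..

lemma sq_integral_exp_mul_sub_intervalAverage_le {p g f f' : ℝ → ℝ} (hab : a < b)
    (hp : Continuous p) (hg : Continuous g) (hf : ∀ x, HasDerivAt f (f' x) x)
    (hf' : Continuous f') {δ : ℝ} (hδ : ∀ x ∈ Icc a b, ∀ y ∈ Icc a b, |p x - p y| ≤ δ) :
    (∫ x in a..b, exp (2 * p x) * g x * (f x - ⨍ y in a..b, f y)) ^ 2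
      ≤ (exp δ * (b - a)) ^ 2 * (∫ x in a..b, exp (2 * p x) * g x ^ 2)
        * ∫ x in a..b, exp (2 * p x) * f' x ^ 2 := by
  have hfc : Continuous f := continuous_iff_continuousAt.2 fun x => (hf x).continuousAt
  have cauchy_schwarz {h : ℝ → ℝ} (hh : Continuous h) :
      (∫ x in a..b, exp (p x) * |h x|) ^ 2 ≤ (b - a) * ∫ x in a..b, exp (2 * p x) * h x ^ 2 := by
    simpa only [mul_pow, sq_abs, ← exp_two_mul_eq_sq] using
      sq_integral_le hab (f := fun x => exp (p x) * |h x|) (by fun_prop)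
  set S := ∫ x in a..b, exp (p x) * |f' x|
  have abs_le : |∫ x in a..b, exp (2 * p x) * g x * (f x - ⨍ y in a..b, f y)|
      ≤ exp δ * S * ∫ x in a..b, exp (p x) * |g x| := by
    rw [← intervalIntegral.integral_const_mul]
    refine (intervalIntegral.abs_integral_le_integral_abs hab.le).trans <|
      intervalIntegral.integral_mono_on hab.le (Continuous.intervalIntegrable (by fun_prop) a b)
        (Continuous.intervalIntegrable (by fun_prop) a b) fun x hx => ?_
    calc |exp (2 * p x) * g x * (f x - ⨍ y in a..b, f y)|
        = exp (p x) * |f x - ⨍ y in a..b, f y| * (exp (p x) * |g x|) := by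
          rw [abs_mul, abs_mul, abs_exp, exp_two_mul_eq_sq]
          ring
      _ ≤ exp δ * S * (exp (p x) * |g x|) := by
          exact mul_le_mul_of_nonneg_right
            (exp_mul_abs_sub_intervalAverage_le hab hp hf hf' hδ hx) (by positivity)
  calc (∫ x in a..b, exp (2 * p x) * g x * (f x - ⨍ y in a..b, f y)) ^ 2
      ≤ (exp δ * S * ∫ x in a..b, exp (p x) * |g x|) ^ 2 := by
        rw [← sq_abs]
        gcongr
    _ = exp δ ^ 2 * (∫ x in a..b, exp (p x) * |g x|) ^ 2 * S ^ 2 := by ring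
    _ ≤ exp δ ^ 2 * ((b - a) * ∫ x in a..b, exp (2 * p x) * g x ^ 2)
          * ((b - a) * ∫ x in a..b, exp (2 * p x) * f' x ^ 2) := by
        have := (sq_nonneg _).trans (cauchy_schwarz hg)
        gcongr
        exacts [cauchy_schwarz hg, cauchy_schwarz hf']
    _ = _ := by ring

lemma integral_deriv_eq_zero_of_periodic {T : ℝ} {f f' : ℝ → ℝ} (hT : f.Periodic T)
    (hf : ∀ x, HasDerivAt f (f' x) x) (hf' : Continuous f') : ∫ x in 0..T, f' x = 0 := by
  rw [intervalIntegral.integral_eq_sub_of_hasDerivAt (fun x _ => hf x)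
    (hf'.intervalIntegrable 0 T), hT.eq, sub_self]

lemma hasDerivAt_integral_of_continuous {F F' : ℝ → ℝ → ℝ} (hF : Continuous (uncurry F))
    (hF' : Continuous (uncurry F')) (h : ∀ t x, HasDerivAt (fun s => F s x) (F' t x) t) (t : ℝ) :
    HasDerivAt (fun s => ∫ x in a..b, F s x) (∫ x in a..b, F' t x) t := by
  obtain ⟨C, hC⟩ := ((isCompact_Icc (a := t - 1) (b := t + 1)).prod
    (isCompact_uIcc (a := a) (b := b))).exists_bound_of_continuousOn hF'.continuousOn
  refine (intervalIntegral.hasDerivAt_integral_of_dominated_loc_of_deriv_le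
    (s := Icc (t - 1) (t + 1)) (bound := fun _ => C) (Icc_mem_nhds (by linarith) (by linarith))
    (Eventually.of_forall fun s => (hF.uncurry_left s).aestronglyMeasurable)
    ((hF.uncurry_left t).intervalIntegrable a b) (hF'.uncurry_left t).aestronglyMeasurable
    (Eventually.of_forall fun x hx s hs => hC (s, x) ⟨hs, uIoc_subset_uIcc hx⟩)
    intervalIntegrable_const (Eventually.of_forall fun x _ s _ => h s x)).2

end IntervalInequalities

section PartialDerivatives

variable {f : ℝ → ℝ → ℝ} {n : WithTop ℕ∞}

lemma hasDerivAt_pdR (hf : ContDiff ℝ 1 (uncurry f)) (t x : ℝ) :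
    HasDerivAt (fun s => f s x) (pdR f t x) t :=
  ((hf.comp (contDiff_id.prodMk contDiff_const)).differentiable one_ne_zero t).hasDerivAt

lemma hasDerivAt_pdT (hf : ContDiff ℝ 1 (uncurry f)) (t x : ℝ) :
    HasDerivAt (fun y => f t y) (pdT f t x) x :=
  ((hf.comp (contDiff_const.prodMk contDiff_id)).differentiable one_ne_zero x).hasDerivAt

lemma pdR_eq_fderiv (hf : ContDiff ℝ 1 (uncurry f)) (t x : ℝ) :
    pdR f t x = fderiv ℝ (uncurry f) (t, x) (1, 0) :=
  (hasDerivAt_pdR hf t x).unique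
    ((hf.differentiable one_ne_zero (t, x)).hasFDerivAt.comp_hasDerivAt (f := fun s => (s, x)) t
      ((hasDerivAt_id t).prodMk (hasDerivAt_const t x)))

lemma pdT_eq_fderiv (hf : ContDiff ℝ 1 (uncurry f)) (t x : ℝ) :
    pdT f t x = fderiv ℝ (uncurry f) (t, x) (0, 1) :=
  (hasDerivAt_pdT hf t x).unique
    ((hf.differentiable one_ne_zero (t, x)).hasFDerivAt.comp_hasDerivAt x
      ((hasDerivAt_const x t).prodMk (hasDerivAt_id x)))

lemma contDiff_pdR (hf : ContDiff ℝ (n + 1) (uncurry f)) : ContDiff ℝ n (uncurry (pdR f)) := by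
  have : uncurry (pdR f) = fun z => fderiv ℝ (uncurry f) z (1, 0) :=
    funext fun z => pdR_eq_fderiv (hf.of_le le_add_self) z.1 z.2
  rw [this]
  exact (hf.fderiv_right le_rfl).clm_apply contDiff_const

lemma contDiff_pdT (hf : ContDiff ℝ (n + 1) (uncurry f)) : ContDiff ℝ n (uncurry (pdT f)) := by
  have : uncurry (pdT f) = fun z => fderiv ℝ (uncurry f) z (0, 1) :=
    funext fun z => pdT_eq_fderiv (hf.of_le le_add_self) z.1 z.2
  rw [this]
  exact (hf.fderiv_right le_rfl).clm_apply contDiff_const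

lemma continuous_pdR (hf : ContDiff ℝ 1 (uncurry f)) : Continuous (uncurry (pdR f)) :=
  (contDiff_pdR (n := 0) (by simpa using hf)).continuous

lemma continuous_pdT (hf : ContDiff ℝ 1 (uncurry f)) : Continuous (uncurry (pdT f)) :=
  (contDiff_pdT (n := 0) (by simpa using hf)).continuous

lemma pdT_pdR (hf : ContDiff ℝ 2 (uncurry f)) (t x : ℝ) :
    pdT (pdR f) t x = pdR (pdT f) t x := by
  have hf1 : ContDiff ℝ 1 (uncurry f) := hf.of_le one_le_two
  have hf' : DifferentiableAt ℝ (fderiv ℝ (uncurry f)) (t, x) :=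
    (hf.fderiv_right (m := 1) le_rfl).differentiable one_ne_zero _
  have fderiv_apply (v w : ℝ × ℝ) : fderiv ℝ (fun z => fderiv ℝ (uncurry f) z v) (t, x) w
      = fderiv ℝ (fderiv ℝ (uncurry f)) (t, x) w v := by
    simp [fderiv_clm_apply hf' (differentiableAt_const v)]
  have hR : uncurry (pdR f) = fun z => fderiv ℝ (uncurry f) z (1, 0) :=
    funext fun z => pdR_eq_fderiv hf1 z.1 z.2
  have hT : uncurry (pdT f) = fun z => fderiv ℝ (uncurry f) z (0, 1) :=
    funext fun z => pdT_eq_fderiv hf1 z.1 z.2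
  rw [pdT_eq_fderiv (contDiff_pdR hf), pdR_eq_fderiv (contDiff_pdT hf), hR, hT, fderiv_apply,
    fderiv_apply]
  exact hf.contDiffAt.isSymmSndFDerivAt (by simp) _ _

lemma periodic_pdR {T : ℝ} (h : ∀ t, (f t).Periodic T) (t : ℝ) : (pdR f t).Periodic T :=
  fun x => by simp only [pdR, h _ x]

lemma periodic_pdT {T : ℝ} (h : ∀ t, (f t).Periodic T) (t : ℝ) : (pdT f t).Periodic T :=
  fun x => by
    rw [pdT, ← deriv_comp_add_const]
    exact congrArg (deriv · x) (funext (h t))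

end PartialDerivatives

section DampedWave

variable {T t₀ : ℝ} {p f h : ℝ → ℝ → ℝ}

/-- Solutions `f`, periodic in space, of the damped wave equation
`e⁻²ᵗ ∂ₜ (e²ᵖ ∂ₜ f) = ∂ₓ (e²ᵖ ∂ₓ f) + e²ᵖ h` for `t ≥ t₀`, with log-weight `p` and source `h`.
The time variable is the logarithm of the areal time, which is the origin of the factor `e⁻²ᵗ`. -/
structure IsDampedWave (T t₀ : ℝ) (p f h : ℝ → ℝ → ℝ) : Prop where
  contDiff_weight : ContDiff ℝ 1 (uncurry p)
  contDiff : ContDiff ℝ 2 (uncurry f)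
  continuous_source : Continuous (uncurry h)
  periodic_weight : ∀ t, (p t).Periodic T
  periodic : ∀ t, (f t).Periodic T
  eqn : ∀ t, t₀ ≤ t → ∀ x,
    exp (-(2 * t)) * (pdR (pdR f) t x + 2 * pdR p t x * pdR f t x)
      = pdT (pdT f) t x + 2 * pdT p t x * pdT f t x + h t x

/-- The kinetic energy of `f` at time `t`, for the log-weight `p`, over one period `T`. -/
noncomputable def kinetic (T : ℝ) (p f : ℝ → ℝ → ℝ) (t : ℝ) : ℝ :=
  exp (-(2 * t)) * ∫ x in 0..T, exp (2 * p t x) * pdR f t x ^ 2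

/-- The potential energy of `f` at time `t`, for the log-weight `p`, over one period `T`. -/
noncomputable def potential (T : ℝ) (p f : ℝ → ℝ → ℝ) (t : ℝ) : ℝ :=
  ∫ x in 0..T, exp (2 * p t x) * pdT f t x ^ 2

/-- The pairing of the momentum of `f` with the deviation of `f` from its mean. Its derivative is,
up to lower-order terms, the difference of the kinetic and the potential energy, so adding a
multiple of it to the energy redistributes the damping between the two. -/
noncomputable def corrector (T : ℝ) (p f : ℝ → ℝ → ℝ) (t : ℝ) : ℝ :=
  exp (-(2 * t)) * ∫ x in 0..T, exp (2 * p t x) * pdR f t x * (f t x - ⨍ y in 0..T, f t y)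

lemma kinetic_nonneg (hT : 0 ≤ T) (p f : ℝ → ℝ → ℝ) (t : ℝ) : 0 ≤ kinetic T p f t :=
  mul_nonneg (exp_pos _).le (intervalIntegral.integral_nonneg hT fun _ _ => by positivity)

lemma potential_nonneg (hT : 0 ≤ T) (p f : ℝ → ℝ → ℝ) (t : ℝ) : 0 ≤ potential T p f t :=
  intervalIntegral.integral_nonneg hT fun _ _ => by positivity

lemma hasDerivAt_exp_neg_two_mul (t : ℝ) :
    HasDerivAt (fun s => exp (-(2 * s))) (-2 * exp (-(2 * t))) t := by
  simpa [mul_comm] using ((hasDerivAt_id t).const_mul 2).neg.exp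

lemma continuous_intervalAverage (hf : Continuous (uncurry f)) :
    Continuous fun t => ⨍ x in 0..T, f t x := by
  simp only [interval_average_eq_div]
  fun_prop

lemma hasDerivAt_intervalAverage (hf : ContDiff ℝ 1 (uncurry f)) (t : ℝ) :
    HasDerivAt (fun s => ⨍ x in 0..T, f s x) (⨍ x in 0..T, pdR f t x) t := by
  simp only [interval_average_eq_div]
  exact (hasDerivAt_integral_of_continuous hf.continuous
    (continuous_pdR hf) (hasDerivAt_pdR hf) t).div_const _

lemma hasDerivAt_integral_exp_mul_mul {q r r' : ℝ → ℝ → ℝ} (hp : ContDiff ℝ 1 (uncurry p))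
    (hq : ContDiff ℝ 1 (uncurry q)) (hr : Continuous (uncurry r)) (hr' : Continuous (uncurry r'))
    (hrr' : ∀ t x, HasDerivAt (fun s => r s x) (r' t x) t) (t : ℝ) :
    HasDerivAt (fun s => ∫ x in 0..T, exp (2 * p s x) * q s x * r s x)
      (∫ x in 0..T, exp (2 * p t x) *
        ((pdR q t x + 2 * pdR p t x * q t x) * r t x + q t x * r' t x)) t := by
  have hpc := hp.continuous
  have hqc := hq.continuous
  have hpt := continuous_pdR hp
  have hqt := continuous_pdR hq
  refine hasDerivAt_integral_of_continuous (F := fun s x => exp (2 * p s x) * q s x * r s x)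
    (F' := fun t x => exp (2 * p t x) *
      ((pdR q t x + 2 * pdR p t x * q t x) * r t x + q t x * r' t x))
    (by fun_prop) (by fun_prop) (fun t x => ?_) t
  exact ((((hasDerivAt_pdR hp t x).const_mul 2).exp.fun_mul (hasDerivAt_pdR hq t x)).fun_mul
    (hrr' t x)).congr_deriv (by ring)

namespace IsDampedWave

variable (w : IsDampedWave T t₀ p f h)

include w

lemma contDiff_one : ContDiff ℝ 1 (uncurry f) := w.contDiff.of_le one_le_two

lemma contDiff_pdR : ContDiff ℝ 1 (uncurry (pdR f)) := _root_.contDiff_pdR w.contDiff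

lemma contDiff_pdT : ContDiff ℝ 1 (uncurry (pdT f)) := _root_.contDiff_pdT w.contDiff

lemma integral_deriv_flux_eq_zero (t : ℝ) {g g' : ℝ → ℝ} (hg : g.Periodic T)
    (hgg' : ∀ x, HasDerivAt g (g' x) x) (hg' : Continuous g') :
    ∫ x in 0..T, exp (2 * p t x) *
      ((pdT (pdT f) t x + 2 * pdT p t x * pdT f t x) * g x + pdT f t x * g' x) = 0 := by
  have hp := w.contDiff_weight.continuous
  have hp' := continuous_pdT w.contDiff_weight
  have hfx := w.contDiff_pdT.continuous
  have hfxx := continuous_pdT w.contDiff_pdT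
  have hgc : Continuous g := continuous_iff_continuousAt.2 fun x => (hgg' x).continuousAt
  refine integral_deriv_eq_zero_of_periodic (f := fun x => exp (2 * p t x) * pdT f t x * g x)
    (fun x => ?_) (fun x => ?_) (by fun_prop)
  · simp only [w.periodic_weight t x, periodic_pdT w.periodic t x, hg x]
  · exact ((((hasDerivAt_pdT w.contDiff_weight t x).const_mul 2).exp.fun_mul
      (hasDerivAt_pdT w.contDiff_pdT t x)).fun_mul (hgg' x)).congr_deriv (by ring)

lemma hasDerivAt_kinetic_add_potential {t : ℝ} (ht : t₀ ≤ t) :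
    HasDerivAt (fun s => kinetic T p f s + potential T p f s)
      (-2 * kinetic T p f t + ∫ x in 0..T, exp (2 * p t x) *
        (2 * pdR p t x * (pdT f t x ^ 2 - exp (-(2 * t)) * pdR f t x ^ 2)
          + 2 * h t x * pdR f t x)) t := by
  have hp := w.contDiff_weight.continuous
  have hpt := continuous_pdR w.contDiff_weight
  have hpx := continuous_pdT w.contDiff_weight
  have hft := w.contDiff_pdR.continuous
  have hfx := w.contDiff_pdT.continuous
  have hftt := continuous_pdR w.contDiff_pdR
  have hfxt := continuous_pdR w.contDiff_pdT
  have hfxx := continuous_pdT w.contDiff_pdT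
  have hkin := hasDerivAt_integral_exp_mul_mul (T := T) w.contDiff_weight w.contDiff_pdR hft hftt
    (hasDerivAt_pdR w.contDiff_pdR) t
  have hpot := hasDerivAt_integral_exp_mul_mul (T := T) w.contDiff_weight w.contDiff_pdT hfx hfxt
    (hasDerivAt_pdR w.contDiff_pdT) t
  have hflux := w.integral_deriv_flux_eq_zero t (periodic_pdR w.periodic t)
    (g' := fun x => pdR (pdT f) t x)
    (fun x => pdT_pdR w.contDiff t x ▸ hasDerivAt_pdT w.contDiff_pdR t x) (by fun_prop)
  simp only [mul_assoc (exp _) (pdR f _ _), mul_assoc (exp _) (pdT f _ _), ← sq] at hkin hpot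
  refine (((hasDerivAt_exp_neg_two_mul t).fun_mul hkin).fun_add hpot).congr_deriv ?_
  rw [kinetic, add_assoc, mul_assoc, add_right_inj]
  refine (sub_eq_self.2 (mul_eq_zero_of_right 2 hflux)).symm.trans ?_
  rw [← intervalIntegral.integral_const_mul, ← intervalIntegral.integral_const_mul,
    ← intervalIntegral.integral_add (Continuous.intervalIntegrable (by fun_prop) 0 T)
      (Continuous.intervalIntegrable (by fun_prop) 0 T),
    ← intervalIntegral.integral_sub (Continuous.intervalIntegrable (by fun_prop) 0 T)
      (Continuous.intervalIntegrable (by fun_prop) 0 T)]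
  refine intervalIntegral.integral_congr fun x _ => ?_
  linear_combination 2 * exp (2 * p t x) * pdR f t x * w.eqn t ht x

lemma hasDerivAt_corrector {t : ℝ} (ht : t₀ ≤ t) :
    HasDerivAt (corrector T p f)
      (-2 * corrector T p f t + kinetic T p f t - potential T p f t
        - exp (-(2 * t)) * (∫ x in 0..T, exp (2 * p t x) * pdR f t x * ⨍ y in 0..T, pdR f t y)
        + ∫ x in 0..T, exp (2 * p t x) * h t x * (f t x - ⨍ y in 0..T, f t y)) t := by
  have hp := w.contDiff_weight.continuous
  have hpt := continuous_pdR w.contDiff_weight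
  have hpx := continuous_pdT w.contDiff_weight
  have hf := w.contDiff.continuous
  have hft := w.contDiff_pdR.continuous
  have hfx := w.contDiff_pdT.continuous
  have hftt := continuous_pdR w.contDiff_pdR
  have hfxx := continuous_pdT w.contDiff_pdT
  have hh := w.continuous_source
  have hmean := hasDerivAt_intervalAverage (T := T) w.contDiff_one
  have hcor := hasDerivAt_integral_exp_mul_mul (T := T) (r := fun s x => f s x - ⨍ y in 0..T, f s y)
    (r' := fun s x => pdR f s x - ⨍ y in 0..T, pdR f s y)
    w.contDiff_weight w.contDiff_pdR (hf.sub ((continuous_intervalAverage hf).comp continuous_fst))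
    (hft.sub ((continuous_intervalAverage hft).comp continuous_fst))
    (fun s x => (hasDerivAt_pdR w.contDiff_one s x).fun_sub (hmean s)) t
  have hflux := w.integral_deriv_flux_eq_zero t
    (g := fun x => f t x - ⨍ y in 0..T, f t y) (g' := fun x => pdT f t x)
    (fun x => by simp only [w.periodic t x])
    (fun x => (hasDerivAt_pdT w.contDiff_one t x).sub_const _) (by fun_prop)
  refine ((hasDerivAt_exp_neg_two_mul t).fun_mul hcor).congr_deriv ?_
  simp only [corrector, kinetic, potential]
  have hint {u : ℝ → ℝ} (hu : Continuous u) : IntervalIntegrable u volume 0 T :=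
    hu.intervalIntegrable 0 T
  rw [mul_assoc, add_sub_assoc, add_sub_assoc, add_assoc, add_right_inj]
  refine (sub_eq_self.2 hflux).symm.trans ?_
  rw [← intervalIntegral.integral_const_mul, ← intervalIntegral.integral_const_mul,
    ← intervalIntegral.integral_const_mul,
    ← intervalIntegral.integral_sub (hint (by fun_prop)) (hint (by fun_prop)),
    ← intervalIntegral.integral_sub (hint (by fun_prop)) (hint (by fun_prop)),
    ← intervalIntegral.integral_sub (hint (by fun_prop)) (hint (by fun_prop)),
    ← intervalIntegral.integral_add (hint (by fun_prop)) (hint (by fun_prop))]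
  refine intervalIntegral.integral_congr fun x _ => ?_
  linear_combination exp (2 * p t x) * (f t x - ⨍ y in 0..T, f t y) * w.eqn t ht x

lemma abs_corrector_le (hT : 0 < T) {t δ : ℝ}
    (hδ : ∀ x ∈ Icc 0 T, ∀ y ∈ Icc 0 T, |p t x - p t y| ≤ δ) :
    |corrector T p f t| ≤ exp δ * T / 2 * exp (-t) * (kinetic T p f t + potential T p f t) := by
  have hk := kinetic_nonneg hT.le p f t
  have hv := potential_nonneg hT.le p f t
  have hI := sq_integral_exp_mul_sub_intervalAverage_le hT
    (w.contDiff_weight.continuous.uncurry_left t) (w.contDiff_pdR.continuous.uncurry_left t)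
    (hasDerivAt_pdT w.contDiff_one t) (w.contDiff_pdT.continuous.uncurry_left t) hδ
  rw [sub_zero] at hI
  refine abs_le_of_sq_le_sq ?_ (by positivity)
  calc corrector T p f t ^ 2
      ≤ exp (-(2 * t)) ^ 2 * ((exp δ * T) ^ 2 *
          (∫ x in 0..T, exp (2 * p t x) * pdR f t x ^ 2) * potential T p f t) := by
        rw [corrector, mul_pow]
        gcongr
        exact hI
    _ = (exp δ * T * exp (-t)) ^ 2 * (kinetic T p f t * potential T p f t) := by
        rw [kinetic, ← mul_neg, exp_two_mul_eq_sq]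
        ring
    _ ≤ (exp δ * T * exp (-t)) ^ 2 * ((kinetic T p f t + potential T p f t) ^ 2 / 4) := by
        gcongr
        linarith [four_mul_le_sq_add (kinetic T p f t) (potential T p f t)]
    _ = (exp δ * T / 2 * exp (-t) * (kinetic T p f t + potential T p f t)) ^ 2 := by ring

lemma deriv_corrector_le (hT : 0 < T) {t c δ : ℝ} (ht : t₀ ≤ t)
    (hδ : ∀ x ∈ Icc 0 T, |p t x - c| ≤ δ) :
    deriv (corrector T p f) t ≤
      -2 * corrector T p f t + (1 + sinh δ ^ 2) * kinetic T p f t - potential T p f t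
        + ∫ x in 0..T, exp (2 * p t x) * h t x * (f t x - ⨍ y in 0..T, f t y) := by
  have hmean := mul_le_mul_of_nonneg_left (neg_sinh_sq_mul_integral_le hT
    (w.contDiff_weight.continuous.uncurry_left t) (w.contDiff_pdR.continuous.uncurry_left t) hδ)
    (exp_pos (-(2 * t))).le
  rw [(w.hasDerivAt_corrector ht).deriv]
  rw [kinetic]
  linarith

end IsDampedWave

end DampedWave

section DifferentialInequalities

lemma isBigO_exp_neg_of_deriv_le {F : ℝ → ℝ} {b c r : ℝ} (hb : 0 < b) (hr : 0 ≤ r)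
    (hF : ∀ᶠ t in atTop, DifferentiableAt ℝ F t) (hF_nonneg : ∀ᶠ t in atTop, 0 ≤ F t)
    (hF' : ∀ᶠ t in atTop, deriv F t ≤ (r * exp (-(b * t)) - c) * F t) :
    F =O[atTop] fun t => exp (-(c * t)) := by
  obtain ⟨t₁, ht₁⟩ := eventually_atTop.1 (hF.and (hF_nonneg.and hF'))
  set G : ℝ → ℝ := fun t => exp (c * t + r / b * exp (-(b * t))) * F t
  have hG {t : ℝ} (ht : t₁ ≤ t) : HasDerivAt G
      (exp (c * t + r / b * exp (-(b * t))) * (deriv F t - (r * exp (-(b * t)) - c) * F t)) t := by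
    have hexp : HasDerivAt (fun s => c * s + r / b * exp (-(b * s)))
        (c * 1 + r / b * (exp (-(b * t)) * -(b * 1))) t :=
      ((hasDerivAt_id t).const_mul c).fun_add
        (((hasDerivAt_id t).const_mul b).fun_neg.exp.const_mul (r / b))
    refine (hexp.exp.fun_mul (ht₁ t ht).1.hasDerivAt).congr_deriv ?_
    field_simp
    ring
  have hG_anti : AntitoneOn G (Ici t₁) := by
    refine antitoneOn_of_deriv_nonpos (convex_Ici t₁)
      (fun t ht => (hG ht).continuousAt.continuousWithinAt)
      (fun t ht => (hG (interior_subset ht)).differentiableAt.differentiableWithinAt) fun t ht => ?_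
    rw [(hG (interior_subset ht)).deriv]
    exact mul_nonpos_of_nonneg_of_nonpos (exp_pos _).le
      (sub_nonpos.2 (ht₁ t (interior_subset ht)).2.2)
  refine IsBigO.of_bound (G t₁) (eventually_atTop.2 ⟨t₁, fun t ht => ?_⟩)
  rw [norm_of_nonneg (ht₁ t ht).2.1, norm_of_nonneg (exp_pos _).le, exp_neg, ← div_eq_mul_inv,
    le_div_iff₀' (exp_pos _)]
  calc exp (c * t) * F t ≤ G t := mul_le_mul_of_nonneg_right
        (exp_le_exp.2 (le_add_of_nonneg_right (by positivity))) (ht₁ t ht).2.1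
    _ ≤ G t₁ := hG_anti self_mem_Ici ht ht

lemma isBigO_exp_neg_mul_of_le {b c : ℝ} (h : b ≤ c) :
    (fun t => exp (-(c * t))) =O[atTop] fun t => exp (-(b * t)) := by
  refine IsBigO.of_bound' ((eventually_ge_atTop 0).mono fun t ht => ?_)
  rw [norm_of_nonneg (exp_pos _).le, norm_of_nonneg (exp_pos _).le]
  gcongr

lemma isBigO_exp_neg_of_deriv_le_of_abs_sub_le {E F ρ : ℝ → ℝ} {b c : ℝ} (hb : 0 < b) (hc : 0 ≤ c)
    (hρ : ρ =O[atTop] fun t => exp (-(b * t))) (hF : ∀ᶠ t in atTop, DifferentiableAt ℝ F t)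
    (hE : ∀ᶠ t in atTop, 0 ≤ E t) (hEF : ∀ᶠ t in atTop, |F t - E t| ≤ ρ t * E t)
    (hF' : ∀ᶠ t in atTop, deriv F t ≤ (ρ t - c) * E t) :
    E =O[atTop] fun t => exp (-(c * t)) := by
  obtain ⟨K, hK, hρK⟩ := hρ.exists_nonneg
  have hρ_le : ∀ᶠ t in atTop, ρ t ≤ K * exp (-(b * t)) := hρK.bound.mono fun t ht => by
    simpa [abs_exp] using le_of_abs_le ht
  have hsmall : ∀ᶠ t in atTop, ρ t ≤ 1 / 2 :=
    (hρ.trans_tendsto (tendsto_exp_neg_atTop_nhds_zero.comp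
      (tendsto_id.const_mul_atTop hb))).eventually_le_const one_half_pos
  have hE_le : ∀ᶠ t in atTop, E t ≤ 2 * F t := by
    filter_upwards [hsmall, hE, hEF] with t hsmall hE hEF
    linarith [neg_le_of_abs_le hEF, mul_le_mul_of_nonneg_right hsmall hE]
  refine (IsBigO.of_bound 2 ?_).trans (isBigO_exp_neg_of_deriv_le (r := 2 * (1 + c) * K) hb
    (by positivity) hF ?_ ?_)
  · filter_upwards [hE, hE_le] with t hE hE_le
    rwa [norm_of_nonneg hE, norm_of_nonneg (by linarith)]
  · filter_upwards [hE, hE_le] with t hE hE_le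
    linarith
  · filter_upwards [hE, hE_le, hEF, hF', hρ_le] with t hE hE_le hEF hF' hρ_le
    calc deriv F t ≤ (ρ t - c) * E t := hF'
      _ = -c * F t + c * (F t - E t) + ρ t * E t := by ring
      _ ≤ -c * F t + c * (ρ t * E t) + ρ t * E t := by
          gcongr
          exact le_of_abs_le hEF
      _ = -c * F t + (1 + c) * (ρ t * E t) := by ring
      _ ≤ -c * F t + (1 + c) * (K * exp (-(b * t)) * (2 * F t)) := by gcongr
      _ = (2 * (1 + c) * K * exp (-(b * t)) - c) * F t := by ring

lemma isBigO_exp_of_hasDerivAt {g g' : ℝ → ℝ} {a : ℝ} (ha : 0 < a)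
    (hg : ∀ t, HasDerivAt g (g' t) t) (hg' : g' =O[atTop] fun t => exp (a * t)) :
    g =O[atTop] fun t => exp (a * t) := by
  obtain ⟨K, hK, hbound⟩ := hg'.exists_nonneg
  obtain ⟨t₁, ht₁⟩ := eventually_atTop.1 (hbound.bound.and (eventually_ge_atTop 0))
  have hB (t : ℝ) : HasDerivAt (fun s => |g t₁| + K / a * exp (a * s)) (K * exp (a * t)) t := by
    refine ((((hasDerivAt_id t).const_mul a).exp.const_mul (K / a)).const_add _).congr_deriv ?_
    field_simp
    simp
  refine IsBigO.of_bound (|g t₁| + K / a) (eventually_atTop.2 ⟨t₁, fun t ht => ?_⟩)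
  have ha_le : ‖g t₁‖ ≤ |g t₁| + K / a * exp (a * t₁) :=
    le_add_of_nonneg_right (mul_nonneg (div_nonneg hK ha.le) (exp_pos _).le)
  have hle := image_norm_le_of_norm_deriv_right_le_deriv_boundary
    (fun s _ => (hg s).continuousAt.continuousWithinAt) (fun s _ => (hg s).hasDerivWithinAt)
    ha_le hB (fun s hs => (ht₁ s hs.1).1.trans_eq (by rw [norm_of_nonneg (exp_pos _).le]))
    (right_mem_Icc.2 ht)
  rw [norm_of_nonneg (exp_pos _).le, add_mul]
  refine hle.trans (add_le_add_left (le_mul_of_one_le_right (abs_nonneg _) ?_) _)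
  exact one_le_exp (mul_nonneg ha.le (ht₁ t ht).2)

end DifferentialInequalities

section GowdyWaveMap

variable {T t₀ t D μ ν : ℝ} {P Q : ℝ → ℝ → ℝ}

/-- A Gowdy wave map, periodic in space, for `t ≥ t₀` in the logarithm `t` of the areal time: `P` is
a wave of constant weight driven by the energy density of `Q`, and `Q` is a wave of log-weight
`P`. -/
structure IsGowdyWaveMap (T t₀ : ℝ) (P Q : ℝ → ℝ → ℝ) : Prop where
  fst : IsDampedWave T t₀ 0 P fun t x =>
    exp (2 * P t x) * (exp (-(2 * t)) * pdR Q t x ^ 2 - pdT Q t x ^ 2)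
  snd : IsDampedWave T t₀ P Q 0

/-- The energy of the pair `(P, Q)` at time `t` over one period `T`. -/
noncomputable def energy (T : ℝ) (P Q : ℝ → ℝ → ℝ) (t : ℝ) : ℝ :=
  (kinetic T 0 P t + potential T 0 P t) + (kinetic T P Q t + potential T P Q t)

/-- The energy corrected by multiples of the two correctors, which decays although the energy itself
is only known not to increase. -/
noncomputable def modifiedEnergy (T μ ν : ℝ) (P Q : ℝ → ℝ → ℝ) (t : ℝ) : ℝ :=
  energy T P Q t + (μ * corrector T 0 P t + ν * corrector T P Q t)

/-- The bound on the oscillation of `P` at time `t` given by its potential energy. -/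
noncomputable def oscBound (T : ℝ) (P : ℝ → ℝ → ℝ) (t : ℝ) : ℝ :=
  √(T * potential T 0 P t)

lemma abs_sub_le_oscBound (hP : ContDiff ℝ 1 (uncurry P)) (hT : 0 < T) {x y : ℝ}
    (hx : x ∈ Icc 0 T) (hy : y ∈ Icc 0 T) : |P t x - P t y| ≤ oscBound T P t := by
  have hPx : Continuous (pdT P t) := (continuous_pdT hP).uncurry_left t
  refine (abs_sub_le_integral_abs_deriv (hasDerivAt_pdT hP t) hPx hx hy).trans (le_sqrt_of_sq_le ?_)
  simpa [potential] using sq_integral_le hT hPx.abs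

lemma abs_sub_intervalAverage_le_oscBound (hP : ContDiff ℝ 1 (uncurry P)) (hT : 0 < T) {x : ℝ}
    (hx : x ∈ Icc 0 T) : |P t x - ⨍ y in 0..T, P t y| ≤ oscBound T P t :=
  abs_sub_intervalAverage_le hT (hP.continuous.uncurry_left t)
    fun _ hy => abs_sub_le_oscBound hP hT hx hy

lemma oscBound_nonneg (T : ℝ) (P : ℝ → ℝ → ℝ) (t : ℝ) : 0 ≤ oscBound T P t := sqrt_nonneg _

lemma energy_nonneg (hT : 0 ≤ T) : 0 ≤ energy T P Q t :=
  add_nonneg (add_nonneg (kinetic_nonneg hT _ _ t) (potential_nonneg hT _ _ t))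
    (add_nonneg (kinetic_nonneg hT _ _ t) (potential_nonneg hT _ _ t))

lemma kinetic_le_energy (hT : 0 ≤ T) : kinetic T 0 P t ≤ energy T P Q t := by
  rw [energy, add_assoc]
  exact le_add_of_nonneg_right (add_nonneg (potential_nonneg hT _ _ t)
    (add_nonneg (kinetic_nonneg hT _ _ t) (potential_nonneg hT _ _ t)))

lemma oscBound_le_sqrt_energy (hT : 0 ≤ T) : oscBound T P t ≤ √(T * energy T P Q t) := by
  refine sqrt_le_sqrt (mul_le_mul_of_nonneg_left ?_ hT)
  rw [energy, add_comm (kinetic T 0 P t), add_assoc]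
  exact le_add_of_nonneg_right (add_nonneg (kinetic_nonneg hT _ _ t)
    (add_nonneg (kinetic_nonneg hT _ _ t) (potential_nonneg hT _ _ t)))

lemma oscBound_isBigO_exp_neg (hT : 0 ≤ T) {c : ℝ}
    (h : energy T P Q =O[atTop] fun t => exp (-(c * t))) :
    oscBound T P =O[atTop] fun t => exp (-(c / 2 * t)) := by
  have hsq : (fun t => √(T * energy T P Q t) ^ 2) =O[atTop] fun t => exp (-(c / 2 * t)) ^ 2 :=
    (h.const_mul_left T).congr (fun t => (sq_sqrt (mul_nonneg hT (energy_nonneg hT))).symm)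
      fun t => by rw [← exp_two_mul_eq_sq]; ring_nf
  refine (IsBigO.of_bound' (Eventually.of_forall fun t => ?_)).trans (hsq.of_pow two_ne_zero)
  rw [norm_of_nonneg (oscBound_nonneg T P t), norm_of_nonneg (sqrt_nonneg _)]
  exact oscBound_le_sqrt_energy hT

namespace IsGowdyWaveMap

variable (w : IsGowdyWaveMap T t₀ P Q)

include w

lemma hasDerivAt_energy (ht : t₀ ≤ t) :
    HasDerivAt (energy T P Q) (-2 * (kinetic T 0 P t + kinetic T P Q t)) t := by
  have hP := w.fst.contDiff.continuous
  have hPt := w.fst.contDiff_pdR.continuous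
  have hQt := w.snd.contDiff_pdR.continuous
  have hQx := w.snd.contDiff_pdT.continuous
  refine ((w.fst.hasDerivAt_kinetic_add_potential ht).add
    (w.snd.hasDerivAt_kinetic_add_potential ht)).congr_deriv ?_
  have hpdR_zero (x : ℝ) : pdR 0 t x = 0 := deriv_const t 0
  simp only [Pi.zero_apply, hpdR_zero, mul_zero, zero_mul, zero_add, add_zero, exp_zero, one_mul]
  rw [add_add_add_comm, ← mul_add, add_eq_left,
    ← intervalIntegral.integral_add (Continuous.intervalIntegrable (by fun_prop) 0 T)
      (Continuous.intervalIntegrable (by fun_prop) 0 T)]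
  refine intervalIntegral.integral_zero_ae (ae_of_all _ fun x _ => ?_)
  ring

lemma antitoneOn_energy (hT : 0 ≤ T) : AntitoneOn (energy T P Q) (Ici t₀) := by
  refine antitoneOn_of_deriv_nonpos (convex_Ici t₀)
    (fun t ht => (w.hasDerivAt_energy ht).continuousAt.continuousWithinAt)
    (fun t ht => (w.hasDerivAt_energy
      (interior_subset ht)).differentiableAt.differentiableWithinAt) fun t ht => ?_
  rw [(w.hasDerivAt_energy (interior_subset ht)).deriv]
  linarith [kinetic_nonneg hT 0 P t, kinetic_nonneg hT P Q t]

lemma oscBound_le (hT : 0 ≤ T) (ht : t₀ ≤ t) : oscBound T P t ≤ √(T * energy T P Q t₀) :=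
  (oscBound_le_sqrt_energy hT).trans (sqrt_le_sqrt
    (mul_le_mul_of_nonneg_left (w.antitoneOn_energy hT self_mem_Ici ht ht) hT))

lemma deriv_corrector_fst_le (hT : 0 < T) (ht : t₀ ≤ t) :
    deriv (corrector T 0 P) t ≤ -2 * corrector T 0 P t + kinetic T 0 P t - potential T 0 P t
      + oscBound T P t * (kinetic T P Q t + potential T P Q t) := by
  have hP := w.fst.contDiff.continuous
  have hQt := w.snd.contDiff_pdR.continuous
  have hQx := w.snd.contDiff_pdT.continuous
  have hderiv := w.fst.deriv_corrector_le hT (c := 0) (δ := 0) ht fun x _ => by simp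
  refine hderiv.trans ?_
  rw [sinh_zero, zero_pow two_ne_zero, add_zero, one_mul]
  gcongr
  rw [kinetic, potential, ← intervalIntegral.integral_const_mul,
    ← intervalIntegral.integral_add (Continuous.intervalIntegrable (by fun_prop) 0 T)
      (Continuous.intervalIntegrable (by fun_prop) 0 T), ← intervalIntegral.integral_const_mul]
  refine intervalIntegral.integral_mono_on hT.le
    (Continuous.intervalIntegrable (by simp only [Pi.zero_apply]; fun_prop) 0 T)
    (Continuous.intervalIntegrable (by fun_prop) 0 T) fun x hx => ?_
  have hosc := abs_sub_intervalAverage_le_oscBound (t := t) w.fst.contDiff_one hT hx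
  obtain ⟨hlo, hhi⟩ := abs_le.1 hosc
  simp only [Pi.zero_apply, mul_zero, exp_zero, one_mul]
  linear_combination
    exp (2 * P t x) * exp (-(2 * t)) * pdR Q t x ^ 2 * hhi + exp (2 * P t x) * pdT Q t x ^ 2 * hlo

lemma deriv_corrector_snd_le (hT : 0 < T) (ht : t₀ ≤ t) :
    deriv (corrector T P Q) t ≤ -2 * corrector T P Q t
      + (1 + sinh (oscBound T P t) ^ 2) * kinetic T P Q t - potential T P Q t := by
  simpa using w.snd.deriv_corrector_le hT ht
    fun x => abs_sub_intervalAverage_le_oscBound w.fst.contDiff_one hT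

lemma abs_corrector_combination_le (hT : 0 < T) (hμ : 0 ≤ μ) (hν : 0 ≤ ν)
    (hD : oscBound T P t ≤ D) :
    |μ * corrector T 0 P t + ν * corrector T P Q t|
      ≤ (μ + ν) * (exp D * T / 2) * exp (-t) * energy T P Q t := by
  have hD₀ : 0 ≤ D := (oscBound_nonneg T P t).trans hD
  have hP : |corrector T 0 P t| ≤ exp D * T / 2 * exp (-t) * energy T P Q t := by
    refine (w.fst.abs_corrector_le hT (δ := D) (by simp [hD₀])).trans ?_
    gcongr
    exact le_add_of_nonneg_right
      (add_nonneg (kinetic_nonneg hT.le _ _ t) (potential_nonneg hT.le _ _ t))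
  have hQ : |corrector T P Q t| ≤ exp D * T / 2 * exp (-t) * energy T P Q t := by
    refine (w.snd.abs_corrector_le hT (δ := D) fun x hx y hy =>
      (abs_sub_le_oscBound w.fst.contDiff_one hT hx hy).trans hD).trans ?_
    gcongr
    exact le_add_of_nonneg_left
      (add_nonneg (kinetic_nonneg hT.le _ _ t) (potential_nonneg hT.le _ _ t))
  calc |μ * corrector T 0 P t + ν * corrector T P Q t|
      ≤ μ * |corrector T 0 P t| + ν * |corrector T P Q t| :=
        (abs_add_le _ _).trans_eq (by rw [abs_mul, abs_mul, abs_of_nonneg hμ, abs_of_nonneg hν])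
    _ ≤ μ * (exp D * T / 2 * exp (-t) * energy T P Q t)
          + ν * (exp D * T / 2 * exp (-t) * energy T P Q t) := by gcongr
    _ = _ := by ring

lemma hasDerivAt_modifiedEnergy (ht : t₀ ≤ t) :
    HasDerivAt (modifiedEnergy T μ ν P Q) (-2 * (kinetic T 0 P t + kinetic T P Q t)
      + (μ * deriv (corrector T 0 P) t + ν * deriv (corrector T P Q) t)) t :=
  (w.hasDerivAt_energy ht).add <|
    ((w.fst.hasDerivAt_corrector ht).differentiableAt.hasDerivAt.const_mul μ).add
      ((w.snd.hasDerivAt_corrector ht).differentiableAt.hasDerivAt.const_mul ν)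

lemma deriv_modifiedEnergy_le (hT : 0 < T) (hμ : 0 ≤ μ) (hν : 0 ≤ ν) (hD : oscBound T P t ≤ D)
    (ht : t₀ ≤ t) :
    deriv (modifiedEnergy T μ ν P Q) t ≤
      (μ - 2) * kinetic T 0 P t - μ * potential T 0 P t
        + (μ * oscBound T P t + ν * (1 + sinh (oscBound T P t) ^ 2) - 2) * kinetic T P Q t
        + (μ * oscBound T P t - ν) * potential T P Q t
        + (μ + ν) * (exp D * T) * exp (-t) * energy T P Q t := by
  rw [(w.hasDerivAt_modifiedEnergy ht).deriv]
  have hP := mul_le_mul_of_nonneg_left (w.deriv_corrector_fst_le hT ht) hμ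
  have hQ := mul_le_mul_of_nonneg_left (w.deriv_corrector_snd_le hT ht) hν
  have hcor := neg_le_of_abs_le (w.abs_corrector_combination_le hT hμ hν hD)
  linear_combination hP + hQ + 2 * hcor

lemma energy_isBigO_of_forall_le (hT : 0 < T) (hμ : 0 ≤ μ) (hν : 0 ≤ ν) {b c : ℝ} (hb : 0 < b)
    (hc : 0 ≤ c) {ρ : ℝ → ℝ} (hρ : ρ =O[atTop] fun t => exp (-(b * t))) (hρ_nonneg : ∀ t, 0 ≤ ρ t)
    (h : ∀ t, t₀ ≤ t →
      (μ - 2) * kinetic T 0 P t - μ * potential T 0 P t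
        + (μ * oscBound T P t + ν * (1 + sinh (oscBound T P t) ^ 2) - 2) * kinetic T P Q t
        + (μ * oscBound T P t - ν) * potential T P Q t ≤ (ρ t - c) * energy T P Q t) :
    energy T P Q =O[atTop] fun t => exp (-(c * t)) := by
  set D := √(T * energy T P Q t₀)
  have hK : 0 ≤ (μ + ν) * (exp D * T) := by positivity
  have hρ' : (fun t => ρ t + (μ + ν) * (exp D * T) * exp (-t)) =O[atTop]
      fun t => exp (-(min b 1 * t)) :=
    (hρ.trans (isBigO_exp_neg_mul_of_le (min_le_left b 1))).add
      (IsBigO.const_mul_left (by simpa using isBigO_exp_neg_mul_of_le (min_le_right b 1)) _)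
  refine isBigO_exp_neg_of_deriv_le_of_abs_sub_le (F := modifiedEnergy T μ ν P Q)
    (lt_min hb one_pos) hc hρ' ?_ (Eventually.of_forall fun t => energy_nonneg hT.le) ?_ ?_
  · filter_upwards [eventually_ge_atTop t₀] with t ht
    exact (w.hasDerivAt_modifiedEnergy ht).differentiableAt
  · filter_upwards [eventually_ge_atTop t₀] with t ht
    rw [modifiedEnergy, add_sub_cancel_left]
    refine (w.abs_corrector_combination_le hT hμ hν (w.oscBound_le hT.le ht)).trans
      (mul_le_mul_of_nonneg_right ?_ (energy_nonneg hT.le))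
    linarith [hρ_nonneg t, mul_nonneg hK (exp_pos (-t)).le]
  · filter_upwards [eventually_ge_atTop t₀] with t ht
    linarith [w.deriv_modifiedEnergy_le hT hμ hν (w.oscBound_le hT.le ht) ht, h t ht]

-- With `μ = 1 / ((1 + D) (2 + sinh² D))` and `ν = (1 + D) μ`, where `D` bounds the oscillation of
-- `P`, each of the four coefficients is at most `-μ`.
lemma exists_energy_isBigO_exp_neg (hT : 0 < T) :
    ∃ c > 0, energy T P Q =O[atTop] fun t => exp (-(c * t)) := by
  set D := √(T * energy T P Q t₀)
  have hD : 0 ≤ D := sqrt_nonneg _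
  set μ := ((1 + D) * (2 + sinh D ^ 2))⁻¹
  have hμ : 0 < μ := by positivity
  have hμ_mul : μ * ((1 + D) * (2 + sinh D ^ 2)) = 1 := inv_mul_cancel₀ (by positivity)
  refine ⟨μ, hμ, w.energy_isBigO_of_forall_le hT hμ.le (ν := (1 + D) * μ) (by positivity) one_pos
    hμ.le (isBigO_zero _ _) (fun _ => le_rfl) fun t ht => ?_⟩
  have hδ : oscBound T P t ≤ D := w.oscBound_le hT.le ht
  have hsinh : sinh (oscBound T P t) ^ 2 ≤ sinh D ^ 2 := by
    have := sinh_nonneg_iff.2 (oscBound_nonneg T P t)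
    gcongr
    exact sinh_le_sinh.2 hδ
  have coeff_kP : μ - 2 ≤ -μ := by
    have hone_le : 1 ≤ (1 + D) * (2 + sinh D ^ 2) :=
      one_le_mul_of_one_le_of_one_le (by linarith) (by linarith [sq_nonneg (sinh D)])
    linarith [le_mul_of_one_le_right hμ.le hone_le]
  have coeff_kQ : μ * oscBound T P t + (1 + D) * μ * (1 + sinh (oscBound T P t) ^ 2) - 2 ≤ -μ := by
    linear_combination μ * hδ + (1 + D) * μ * hsinh + hμ_mul
  have coeff_vQ : μ * oscBound T P t - (1 + D) * μ ≤ -μ := by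
    linear_combination μ * hδ
  have hkP := mul_le_mul_of_nonneg_right coeff_kP (kinetic_nonneg hT.le 0 P t)
  have hkQ := mul_le_mul_of_nonneg_right coeff_kQ (kinetic_nonneg hT.le P Q t)
  have hvQ := mul_le_mul_of_nonneg_right coeff_vQ (potential_nonneg hT.le P Q t)
  rw [energy]
  linear_combination hkP + hkQ + hvQ

lemma energy_isBigO_exp_neg (hT : 0 < T) : energy T P Q =O[atTop] fun t => exp (-t) := by
  obtain ⟨c, hc, hE⟩ := w.exists_energy_isBigO_exp_neg hT
  have hδ := oscBound_isBigO_exp_neg hT.le hE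
  have hρ : (fun t => oscBound T P t + sinh (oscBound T P t) ^ 2) =O[atTop]
      fun t => exp (-(c / 2 * t)) := by
    have hdiff : DifferentiableAt ℝ (fun x => x + sinh x ^ 2) 0 := by fun_prop
    have hδ_zero : Tendsto (oscBound T P) atTop (nhds 0) :=
      hδ.trans_tendsto (tendsto_exp_neg_atTop_nhds_zero.comp
        (tendsto_id.const_mul_atTop (half_pos hc)))
    have hcomp := hdiff.isBigO_sub.comp_tendsto hδ_zero
    simp only [comp_def, sinh_zero, zero_pow two_ne_zero, add_zero, sub_zero] at hcomp
    exact hcomp.trans hδ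
  refine (w.energy_isBigO_of_forall_le hT one_pos.le one_pos.le (half_pos hc) one_pos.le hρ
    (fun t => add_nonneg (oscBound_nonneg T P t) (sq_nonneg _)) fun t _ => ?_).congr_right (by simp)
  have hP := mul_nonneg (add_nonneg (oscBound_nonneg T P t) (sq_nonneg (sinh (oscBound T P t))))
    (add_nonneg (kinetic_nonneg hT.le 0 P t)
      (potential_nonneg hT.le 0 P t))
  have hQ := mul_nonneg (sq_nonneg (sinh (oscBound T P t)))
    (potential_nonneg hT.le P Q t)
  rw [energy]
  linear_combination hP + hQ

lemma intervalAverage_pdR_isBigO (hT : 0 < T) :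
    (fun t => ⨍ x in 0..T, pdR P t x) =O[atTop] fun t => exp (1 / 2 * t) := by
  have hsq : (fun t => √(T⁻¹ * (exp (2 * t) * energy T P Q t)) ^ 2) =O[atTop]
      fun t => exp (1 / 2 * t) ^ 2 := by
    have hE := ((isBigO_refl (fun t => exp (2 * t)) atTop).mul
      (w.energy_isBigO_exp_neg hT)).const_mul_left T⁻¹
    refine hE.congr (fun t => (sq_sqrt ?_).symm) fun t => ?_
    · exact mul_nonneg (inv_pos.2 hT).le (mul_nonneg (exp_pos _).le (energy_nonneg hT.le))
    · rw [← exp_add, ← exp_two_mul_eq_sq]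
      ring_nf
  refine (IsBigO.of_bound' (Eventually.of_forall fun t => ?_)).trans (hsq.of_pow two_ne_zero)
  rw [norm_of_nonneg (sqrt_nonneg _)]
  refine abs_le_sqrt ?_
  calc (⨍ x in 0..T, pdR P t x) ^ 2 ≤ ⨍ x in 0..T, pdR P t x ^ 2 :=
        sq_intervalAverage_le hT (w.fst.contDiff_pdR.continuous.uncurry_left t)
    _ = T⁻¹ * (exp (2 * t) * kinetic T 0 P t) := by
        rw [interval_average_eq, kinetic, ← mul_assoc (exp _), ← exp_add]
        simp
    _ ≤ T⁻¹ * (exp (2 * t) * energy T P Q t) := by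
        gcongr
        exact kinetic_le_energy hT.le

lemma exists_eventually_abs_fst_le (hT : 0 < T) :
    ∃ C, ∀ᶠ t in atTop, ∀ x, |P t x| ≤ C * exp (1 / 2 * t) := by
  have hmean : (fun t => ⨍ x in 0..T, P t x) =O[atTop] fun t => exp (1 / 2 * t) :=
    isBigO_exp_of_hasDerivAt one_half_pos (hasDerivAt_intervalAverage w.fst.contDiff_one)
      (w.intervalAverage_pdR_isBigO hT)
  obtain ⟨K, hK⟩ := hmean.bound
  set D := √(T * energy T P Q t₀)
  refine ⟨D + K, ?_⟩
  filter_upwards [hK, eventually_ge_atTop t₀, eventually_ge_atTop 0] with t hK ht ht0 x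
  obtain ⟨y, hy, hxy⟩ := (w.fst.periodic t).exists_mem_Ico₀ hT x
  rw [norm_eq_abs, norm_of_nonneg (exp_pos _).le] at hK
  calc |P t x| = |(P t y - ⨍ z in 0..T, P t z) + ⨍ z in 0..T, P t z| := by
        rw [hxy, sub_add_cancel]
    _ ≤ D * 1 + K * exp (1 / 2 * t) := by
        rw [mul_one]
        exact (abs_add_le _ _).trans (add_le_add ((abs_sub_intervalAverage_le_oscBound
          w.fst.contDiff_one hT (Ico_subset_Icc_self hy)).trans (w.oscBound_le hT.le ht)) hK)
    _ ≤ D * exp (1 / 2 * t) + K * exp (1 / 2 * t) := by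
        gcongr
        exact one_le_exp (by positivity)
    _ = (D + K) * exp (1 / 2 * t) := by ring

end IsGowdyWaveMap

end GowdyWaveMap

lemma exists_abs_le_mul_of_eventually {u : ℝ → ℝ → ℝ} {g : ℝ → ℝ} {T a C : ℝ} (hT : 0 < T)
    (hu : Continuous (uncurry u)) (hper : ∀ t, (u t).Periodic T)
    (hg : ContinuousOn g (Ici a)) (hg0 : ∀ t ∈ Ici a, 0 < g t)
    (h : ∀ᶠ t in atTop, ∀ x, |u t x| ≤ C * g t) :
    ∃ K, 0 < K ∧ ∀ t, a ≤ t → ∀ x, |u t x| ≤ K * g t := by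
  obtain ⟨b, hb⟩ := eventually_atTop.1 h
  have hquot : ContinuousOn (fun z : ℝ × ℝ => u z.1 z.2 / g z.1) (Icc a b ×ˢ Icc 0 T) :=
    hu.continuousOn.div (hg.comp continuousOn_fst fun z hz => hz.1.1) fun z hz =>
      (hg0 _ hz.1.1).ne'
  obtain ⟨M, hM⟩ := (isCompact_Icc.prod isCompact_Icc).exists_bound_of_continuousOn hquot
  refine ⟨max 1 (max C M), by positivity, fun t ht x => ?_⟩
  rw [← div_le_iff₀ (hg0 t ht)]
  rcases le_total b t with hbt | htb
  · have hC : |u t x| / g t ≤ C := (div_le_iff₀ (hg0 t ht)).2 (hb t hbt x)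
    exact hC.trans ((le_max_left C M).trans (le_max_right _ _))
  · obtain ⟨y, hy, hxy⟩ := (hper t).exists_mem_Ico₀ hT x
    have hM : |u t y / g t| ≤ M := hM (t, y) ⟨⟨ht, htb⟩, Ico_subset_Icc_self hy⟩
    rw [abs_div, abs_of_pos (hg0 t ht)] at hM
    rw [hxy]
    exact hM.trans ((le_max_right C M).trans (le_max_right _ _))

section LogTime

variable {f U A : ℝ → ℝ → ℝ} {T R₀ : ℝ}

lemma hasDerivAt_comp_exp (hf : ContDiff ℝ 1 (uncurry f)) (t x : ℝ) :
    HasDerivAt (fun s => f (exp s) x) (exp t * pdR f (exp t) x) t := by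
  rw [mul_comm]
  exact (hasDerivAt_pdR hf (exp t) x).comp t (hasDerivAt_exp t)

lemma pdR_comp_exp (hf : ContDiff ℝ 1 (uncurry f)) :
    pdR (fun t x => f (exp t) x) = fun t x => exp t * pdR f (exp t) x :=
  funext fun t => funext fun x => (hasDerivAt_comp_exp hf t x).deriv

lemma pdR_pdR_comp_exp (hf : ContDiff ℝ 2 (uncurry f)) (t x : ℝ) :
    pdR (pdR fun t x => f (exp t) x) t x
      = exp t * pdR f (exp t) x + exp t ^ 2 * pdR (pdR f) (exp t) x := by
  rw [pdR_comp_exp (hf.of_le one_le_two), pow_two, mul_assoc]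
  exact ((hasDerivAt_exp t).mul (hasDerivAt_comp_exp (contDiff_pdR hf) t x)).deriv

lemma contDiff_comp_exp {n : WithTop ℕ∞} (hf : ContDiff ℝ n (uncurry f)) :
    ContDiff ℝ n (uncurry fun t x => f (exp t) x) :=
  hf.comp ((contDiff_exp.comp contDiff_fst).prodMk contDiff_snd)

lemma deriv_mul_pdR (hf : ContDiff ℝ 2 (uncurry f)) (R θ : ℝ) :
    deriv (fun r => r * pdR f r θ) R = pdR f R θ + R * pdR (pdR f) R θ := by
  rw [← one_mul (pdR f R θ)]
  exact ((hasDerivAt_id R).mul (hasDerivAt_pdR (contDiff_pdR hf) R θ)).deriv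

lemma deriv_inv_mul_pdR (hf : ContDiff ℝ 2 (uncurry f)) {R : ℝ} (hR : R ≠ 0) (θ : ℝ) :
    deriv (fun r => r⁻¹ * pdR f r θ) R
      = -(R ^ 2)⁻¹ * pdR f R θ + R⁻¹ * pdR (pdR f) R θ :=
  ((hasDerivAt_inv hR).mul (hasDerivAt_pdR (contDiff_pdR hf) R θ)).deriv

lemma deriv_const_mul_pdT (c R θ : ℝ) :
    deriv (fun x => c * pdT f R x) θ = c * pdT (pdT f) R θ :=
  deriv_const_mul_field c

/-- The first component of the wave map of a Gowdy solution, in the logarithmic time `t = log R`. -/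
noncomputable def logTimeFst (U : ℝ → ℝ → ℝ) (t x : ℝ) : ℝ := 2 * U (exp t) x - t

lemma contDiff_logTimeFst {n : WithTop ℕ∞} (hU : ContDiff ℝ n (uncurry U)) :
    ContDiff ℝ n (uncurry (logTimeFst U)) :=
  (contDiff_const.mul (contDiff_comp_exp hU)).sub contDiff_fst

lemma hasDerivAt_logTimeFst (hU : ContDiff ℝ 1 (uncurry U)) (t x : ℝ) :
    HasDerivAt (fun s => logTimeFst U s x) (2 * (exp t * pdR U (exp t) x) - 1) t :=
  ((hasDerivAt_comp_exp hU t x).const_mul 2).sub (hasDerivAt_id t)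

lemma pdR_logTimeFst (hU : ContDiff ℝ 1 (uncurry U)) :
    pdR (logTimeFst U) = fun t x => 2 * (exp t * pdR U (exp t) x) - 1 :=
  funext fun t => funext fun x => (hasDerivAt_logTimeFst hU t x).deriv

lemma pdR_pdR_logTimeFst (hU : ContDiff ℝ 2 (uncurry U)) (t x : ℝ) :
    pdR (pdR (logTimeFst U)) t x
      = 2 * (exp t * pdR U (exp t) x + exp t ^ 2 * pdR (pdR U) (exp t) x) := by
  rw [pdR_logTimeFst (hU.of_le one_le_two), pow_two, mul_assoc]
  have hmul := (hasDerivAt_exp t).mul (hasDerivAt_comp_exp (contDiff_pdR hU) t x)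
  exact ((hmul.const_mul 2).sub_const 1).deriv

lemma pdT_logTimeFst : pdT (logTimeFst U) = fun t x => 2 * pdT U (exp t) x := by
  funext t x
  simp only [pdT, logTimeFst, deriv_sub_const_fun, deriv_const_mul_field]

lemma pdT_pdT_logTimeFst (t x : ℝ) :
    pdT (pdT (logTimeFst U)) t x = 2 * pdT (pdT U) (exp t) x := by
  rw [pdT_logTimeFst]
  exact deriv_const_mul_field 2

lemma exp_neg_two_mul (t : ℝ) : exp (-(2 * t)) = (exp t ^ 2)⁻¹ := by
  rw [exp_neg, ← exp_nat_mul, Nat.cast_ofNat]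

lemma exp_two_mul_logTimeFst (t x : ℝ) :
    exp (2 * logTimeFst U t x) = exp (4 * U (exp t) x) * (exp t ^ 2)⁻¹ := by
  rw [← exp_neg_two_mul, ← exp_add, logTimeFst]
  ring_nf

lemma isDampedWave_logTimeFst (hR₀ : 0 < R₀) (hU : ContDiff ℝ 2 (uncurry U))
    (hA : ContDiff ℝ 1 (uncurry A)) (hper : ∀ R, (U R).Periodic T)
    (eqU : ∀ R, R₀ ≤ R → ∀ θ,
      deriv (fun r => r * pdR U r θ) R - deriv (fun t => R * pdT U R t) θ
        = exp (4 * U R θ) / (2 * R) * (pdR A R θ ^ 2 - pdT A R θ ^ 2)) :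
    IsDampedWave T (log R₀) 0 (logTimeFst U) fun t x =>
      exp (2 * logTimeFst U t x) *
        (exp (-(2 * t)) * pdR (fun t x => A (exp t) x) t x ^ 2
          - pdT (fun t x => A (exp t) x) t x ^ 2) where
  contDiff_weight := contDiff_const
  contDiff := contDiff_logTimeFst hU
  continuous_source :=
    ((contDiff_logTimeFst hU).continuous.const_mul 2).rexp.mul
      (((continuous_fst.const_mul 2).neg.rexp.mul
        ((continuous_pdR (contDiff_comp_exp hA)).pow 2)).sub
          ((continuous_pdT (contDiff_comp_exp hA)).pow 2))
  periodic_weight _ _ := rfl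
  periodic t x := by simp only [logTimeFst, hper _ x]
  eqn t ht x := by
    have h := eqU (exp t) ((log_le_iff_le_exp hR₀).1 ht) x
    rw [deriv_mul_pdR hU, deriv_const_mul_pdT] at h
    have hpdR : pdR (0 : ℝ → ℝ → ℝ) t x = 0 := deriv_const t (0 : ℝ)
    have hpdT : pdT (0 : ℝ → ℝ → ℝ) t x = 0 := deriv_const x (0 : ℝ)
    have hpdT_A : pdT (fun t x => A (exp t) x) t x = pdT A (exp t) x := rfl
    rw [pdR_pdR_logTimeFst hU, pdT_pdT_logTimeFst, pdR_comp_exp hA, exp_two_mul_logTimeFst,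
      exp_neg_two_mul, hpdR, hpdT, hpdT_A]
    beta_reduce
    have hexp := exp_ne_zero t
    generalize exp t = R at h hexp ⊢
    field_simp at h ⊢
    linear_combination h

lemma isDampedWave_comp_exp (hR₀ : 0 < R₀) (hU : ContDiff ℝ 1 (uncurry U))
    (hA : ContDiff ℝ 2 (uncurry A)) (hUper : ∀ R, (U R).Periodic T)
    (hAper : ∀ R, (A R).Periodic T)
    (eqA : ∀ R, R₀ ≤ R → ∀ θ,
      deriv (fun r => r⁻¹ * pdR A r θ) R - deriv (fun t => R⁻¹ * pdT A R t) θ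
        = 4 / R * (-(pdR U R θ * pdR A R θ) + pdT U R θ * pdT A R θ)) :
    IsDampedWave T (log R₀) (logTimeFst U) (fun t x => A (exp t) x) 0 where
  contDiff_weight := contDiff_logTimeFst hU
  contDiff := contDiff_comp_exp hA
  continuous_source := continuous_const
  periodic_weight t x := by simp only [logTimeFst, hUper _ x]
  periodic t := hAper (exp t)
  eqn t ht x := by
    have h := eqA (exp t) ((log_le_iff_le_exp hR₀).1 ht) x
    rw [deriv_inv_mul_pdR hA (exp_ne_zero t), deriv_const_mul_pdT] at h
    have hpdT : pdT (fun t x => A (exp t) x) t x = pdT A (exp t) x := rfl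
    have hpdT_pdT : pdT (pdT fun t x => A (exp t) x) t x = pdT (pdT A) (exp t) x := rfl
    rw [pdR_pdR_comp_exp hA, hpdT_pdT, pdR_comp_exp (hA.of_le one_le_two), pdR_logTimeFst hU,
      pdT_logTimeFst, hpdT, exp_neg_two_mul, Pi.zero_apply, Pi.zero_apply]
    beta_reduce
    have hexp := exp_ne_zero t
    generalize exp t = R at h hexp ⊢
    field_simp at h ⊢
    linear_combination h

lemma abs_le_mul_sqrt_of_abs_logTimeFst_le {C R θ : ℝ} (hR : 1 ≤ R)
    (h : |logTimeFst U (log R) θ| ≤ C * exp (1 / 2 * log R)) :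
    |U R θ| ≤ (C / 2 + 1) * √R := by
  have hR0 : 0 < R := zero_lt_one.trans_le hR
  have hexp : exp (1 / 2 * log R) = √R := by
    rw [sqrt_eq_rpow, rpow_def_of_pos hR0, mul_comm]
  have hlog : log R ≤ 2 * √R := by
    rw [← hexp]
    linarith [add_one_le_exp (1 / 2 * log R)]
  rw [hexp, logTimeFst, exp_log hR0] at h
  rw [abs_le] at h ⊢
  constructor <;> linarith [log_nonneg hR]

end LogTime

theorem stmt12_general
    (R₀ T : ℝ) (hR₀ : 0 < R₀) (hT : 0 < T)
    (U A : ℝ → ℝ → ℝ)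
    (hU : ContDiff ℝ 2 (Function.uncurry U))
    (hA : ContDiff ℝ 2 (Function.uncurry A))
    (hUper : ∀ R θ, U R (θ + T) = U R θ)
    (hAper : ∀ R θ, A R (θ + T) = A R θ)
    (eqU : ∀ R, R₀ ≤ R → ∀ θ : ℝ,
      deriv (fun r => r * pdR U r θ) R - deriv (fun t => R * pdT U R t) θ
        = exp (4 * U R θ) / (2 * R) * ((pdR A R θ) ^ 2 - (pdT A R θ) ^ 2))
    (eqA : ∀ R, R₀ ≤ R → ∀ θ : ℝ,
      deriv (fun r => r⁻¹ * pdR A r θ) R - deriv (fun t => R⁻¹ * pdT A R t) θ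
        = 4 / R * (-(pdR U R θ * pdR A R θ) + pdT U R θ * pdT A R θ)) :
    ∃ C : ℝ, 0 < C ∧ ∀ R, R₀ ≤ R → ∀ θ : ℝ, |U R θ| ≤ C * Real.sqrt R := by
  have waveMap : IsGowdyWaveMap T (log R₀) (logTimeFst U) fun t x => A (exp t) x :=
    ⟨isDampedWave_logTimeFst hR₀ hU (hA.of_le one_le_two) hUper eqU,
      isDampedWave_comp_exp hR₀ (hU.of_le one_le_two) hA hUper hAper eqA⟩
  obtain ⟨C, hC⟩ := waveMap.exists_eventually_abs_fst_le hT
  refine exists_abs_le_mul_of_eventually (C := C / 2 + 1) hT hU.continuous hUper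
    continuous_sqrt.continuousOn (fun R hR => sqrt_pos.2 (hR₀.trans_le hR)) ?_
  filter_upwards [tendsto_log_atTop.eventually hC, eventually_ge_atTop 1] with R hCR hR θ
  exact abs_le_mul_sqrt_of_abs_logTimeFst_le hR (hCR θ)

theorem stmt12
    (R₀ : ℝ) (hR₀ : 0 < R₀)
    (U A : ℝ → ℝ → ℝ)
    (hU : ContDiff ℝ (⊤ : ℕ∞) (Function.uncurry U))
    (hA : ContDiff ℝ (⊤ : ℕ∞) (Function.uncurry A))
    (hUper : ∀ R θ, U R (θ + 2 * π) = U R θ)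
    (hAper : ∀ R θ, A R (θ + 2 * π) = A R θ)
    (eqU : ∀ R, R₀ ≤ R → ∀ θ : ℝ,
      deriv (fun r => r * pdR U r θ) R - deriv (fun t => R * pdT U R t) θ
        = exp (4 * U R θ) / (2 * R) * ((pdR A R θ) ^ 2 - (pdT A R θ) ^ 2))
    (eqA : ∀ R, R₀ ≤ R → ∀ θ : ℝ,
      deriv (fun r => r⁻¹ * pdR A r θ) R - deriv (fun t => R⁻¹ * pdT A R t) θ
        = 4 / R * (-(pdR U R θ * pdR A R θ) + pdT U R θ * pdT A R θ))
 :
    ∃ C : ℝ, 0 < C ∧ ∀ R, R₀ ≤ R → ∀ θ : ℝ, |U R θ| ≤ C * Real.sqrt R := by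
  exact stmt12_general R₀ (2 * π) hR₀ two_pi_pos U A (hU.of_le (by norm_cast))
    (hA.of_le (by norm_cast)) hUper hAper eqU eqA
end
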